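/- For any quaternions u₁, u, u₂, u₃ over ℝ, the mixed product of the triple commutator is anticommutative: ⟪[u₁, u, u₂], u₃⟫ = -⟪[u₃, u, u₂], u₁⟫. -/

import Mathlib

open Quaternion RealInnerProductSpace

/-!
Write `p = star u * u₂` and `q = u₂ * star u`, so that twice the triple commutator is the value at
`u₁` of the linear map `x ↦ x * p - q * x`. Multiplication by `p` on one side has adjoint
multiplication by `star p` on the same side, so its symmetric part is multiplication by the scalar
`p.re`. The real part is a trace form, hence `p.re = q.re`, the two symmetric parts cancel and the
map is skew-adjoint.
-/

section CommRing

variable {R : Type*} [CommRing R]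

lemma quaternion_re_mul_comm (a b : ℍ[R]) : (a * b).re = (b * a).re := by
  simp only [Quaternion.re_mul]
  ring

lemma quaternion_re_mul_mul_star_add_swap (p x y : ℍ[R]) :
    (x * p * star y).re + (y * p * star x).re = 2 * p.re * (x * star y).re := by
  have star_swap : (y * p * star x).re = (x * star p * star y).re := by
    rw [← Quaternion.re_star, star_mul, star_mul, star_star, mul_assoc]
  calc (x * p * star y).re + (y * p * star x).re
      = (x * (p + star p) * star y).re := by
        rw [star_swap, ← Quaternion.re_add, ← add_mul, ← mul_add]
    _ = 2 * p.re * (x * star y).re := by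
        rw [Quaternion.self_add_star', Quaternion.mul_coe_eq_smul, smul_mul_assoc,
          Quaternion.re_smul, smul_eq_mul]

lemma quaternion_re_mul_mul_star_add_swap_left (q x y : ℍ[R]) :
    (q * x * star y).re + (q * y * star x).re = 2 * q.re * (x * star y).re := by
  have cycle (a b : ℍ[R]) : (q * a * star b).re = (star b * q * a).re := by
    rw [quaternion_re_mul_comm, mul_assoc]
  rw [cycle, cycle, quaternion_re_mul_comm x]
  simpa only [star_star] using quaternion_re_mul_mul_star_add_swap q (star y) (star x)

lemma quaternion_re_mul_sub_mul_mul_star_swap {p q : ℍ[R]} (hpq : p.re = q.re) (x y : ℍ[R]) :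
    ((x * p - q * x) * star y).re = -((y * p - q * y) * star x).re := by
  have right := quaternion_re_mul_mul_star_add_swap p x y
  have left := quaternion_re_mul_mul_star_add_swap_left q x y
  rw [hpq] at right
  simp only [sub_mul, Quaternion.re_sub]
  linear_combination right - left

end CommRing

section Field

variable {K : Type*} [Field K] [LinearOrder K] [IsStrictOrderedRing K]

lemma quaternion_div_coe (a : ℍ[K]) (r : K) : a / (r : ℍ[K]) = r⁻¹ • a := by
  rw [div_eq_mul_inv, ← Quaternion.coe_inv, Quaternion.mul_coe_eq_smul]

lemma quaternion_re_div_two_mul (a b : ℍ[K]) : (a / 2 * b).re = (a * b).re / 2 := by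
  have two_eq_coe : (2 : ℍ[K]) = ((2 : K) : ℍ[K]) := rfl
  rw [two_eq_coe, quaternion_div_coe, smul_mul_assoc, Quaternion.re_smul, smul_eq_mul,
    inv_mul_eq_div]

theorem quaternion_mixed_product_anticomm_general (u₁ u u₂ u₃ : ℍ[K]) :
    ((u₁ * star u * u₂ - u₂ * star u * u₁) / 2 * star u₃).re =
      -((u₃ * star u * u₂ - u₂ * star u * u₃) / 2 * star u₁).re := by
  have skew := quaternion_re_mul_sub_mul_mul_star_swap
    (quaternion_re_mul_comm (star u) u₂) u₁ u₃
  simp only [← mul_assoc] at skew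
  rw [quaternion_re_div_two_mul, quaternion_re_div_two_mul, skew, neg_div]

end Field

theorem quaternion_mixed_product_anticomm (u₁ u u₂ u₃ : ℍ) :
    ⟪(u₁ * star u * u₂ - u₂ * star u * u₁) / 2, u₃⟫ =
      -⟪(u₃ * star u * u₂ - u₂ * star u * u₃) / 2, u₁⟫ := by
  simpa only [Quaternion.inner_def] using quaternion_mixed_product_anticomm_general u₁ u u₂ u₃
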